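/- Convergence of p-variations of controlled processes: Let x be a fractional Brownian motion with Hurst parameter ν ∈ (0,1/2], let z and z′ be continuous real-valued processes on [0,1] such that |z_t − z_s − z′_s (x_t − x_s)| ≤ G (t−s)^{2ν} for all 0 ≤ s ≤ t ≤ 1, where G is an almost surely finite random variable, and let p > 1/(2ν). Then, with c_p = 2^{p/2} Γ((p+1)/2)/√π, one has almost surely (1/n) Σ_{k=0}^{n−1} |n^ν (z_{t_{k+1}} − z_{t_k})|^p → c_p ∫₀¹ |z′_t|^p dt as n → ∞. -/

import Mathlib

/-!
The proof rests on Gaussian concentration for the fourth moment. Write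
`ξ_k = n^ν (x_{t_{k+1}} - x_{t_k})` for the normalized increments, which are standard Gaussians with
correlations `rho ν (j - k)`. For bounded weights `w_k` put `F(ξ) = (1/n) ∑ w_k |ξ_k|^p`, whose mean
is `c_p (1/n) ∑ w_k`. As `p > 1/(2ν) ≥ 1`, the function `F` is continuously differentiable, and the
rotation argument of Maurey and Pisier (`maurey_pisier`) bounds `E|F(ξ) - E F(ξ)|⁴` by a constant
times the fourth moment of `F'(ξ) η`, with `η` an independent copy of `ξ`.

Given `ξ`, the variable `F'(ξ) η` is Gaussian, and its variance is the covariance form evaluated at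
the gradient of `F`. For `ν ≤ 1/2` the correlations off the diagonal are nonpositive (concavity of
`t ↦ t^{2ν}`) and every row sum of the correlation matrix is nonnegative (the row sum telescopes to
the covariance of an increment with `x_1`), so the form is at most `2 |a|²` uniformly in `n`
(`quad_form_le`). Hence the fourth moment is `O(n⁻²)` (`moment_four_bound`), which is summable, so
almost surely `F(ξ) - E F(ξ) → 0` (`increments_ae_tendsto`).

Taking the weights `t_k^i` for all `i` simultaneously, and approximating the continuous function
`|z'|^p` uniformly by polynomials (`tendsto_weighted_of_monomials`), gives
`(1/n) ∑ |z'_{t_k}|^p |ξ_k|^p → c_p ∫₀¹ |z'|^p` almost surely. Finally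
`|n^ν (z_{t_{k+1}} - z_{t_k}) - z'_{t_k} ξ_k| ≤ G n^{-ν}` uniformly in `k`, and Minkowski's
inequality shows that such a perturbation does not change the limit
(`tendsto_p_mean_of_perturbation`).
-/

open MeasureTheory ProbabilityTheory Filter
open scoped ENNReal NNReal

noncomputable section

variable {Ω : Type*} [MeasurableSpace Ω]

/-- The smallest point `⌈n s⌉ / n` of the uniform `n`-partition that is `≥ s`. -/
def eps (n : ℕ) (s : ℝ) : ℝ := (⌈(n : ℝ) * s⌉ : ℝ) / n

/-- Discrete integral `J_s^t(f;h)` of a two-parameter process `f` against the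
increments `h k = h_{t_k t_{k+1}}` along the uniform `n`-partition. -/
def Jtwo (n : ℕ) (f : ℝ → ℝ → Ω → ℝ) (h : ℕ → Ω → ℝ) (s t : ℝ) (ω : Ω) : ℝ :=
  ∑ k ∈ Finset.range n,
    if s ≤ (k : ℝ) / n ∧ (k : ℝ) / n < t then f (eps n s) ((k : ℝ) / n) ω * h k ω else 0

/-- Discrete integral `J_s^t(y;h)` of a one-parameter path `y`. -/
def Jone (n : ℕ) (y : ℝ → Ω → ℝ) (h : ℕ → Ω → ℝ) (s t : ℝ) (ω : Ω) : ℝ :=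
  ∑ k ∈ Finset.range n,
    if s ≤ (k : ℝ) / n ∧ (k : ℝ) / n < t then (y ((k : ℝ) / n) ω - y (eps n s) ω) * h k ω else 0

/-- A scalar `(L_p, ν, ℓ)`-rough path over the continuous process `X`. -/
def IsRoughPath (P : Measure Ω) (p : ℝ≥0∞) (ν : ℝ) (ℓ : ℕ) (C : ℝ)
    (X : ℝ → Ω → ℝ) (x : ℕ → ℝ → ℝ → Ω → ℝ) : Prop :=
  (∀ i s t, Measurable (x i s t)) ∧
  (∀ ω, ContinuousOn (fun t => X t ω) (Set.Icc 0 1)) ∧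
  (∀ s t ω, x 0 s t ω = 1) ∧
  (∀ s t ω, x 1 s t ω = X t ω - X s ω) ∧
  (∀ k, 1 ≤ k → k ≤ ℓ - 1 → ∀ s u t : ℝ, 0 ≤ s → s ≤ u → u ≤ t → t ≤ 1 → ∀ ω,
    x k s t ω = ∑ j ∈ Finset.range (k + 1), x (k - j) s u ω * x j u t ω) ∧
  (∀ k, k ≤ ℓ - 1 → ∀ s t : ℝ, 0 ≤ s → s ≤ t → t ≤ 1 →
    eLpNorm (x k s t) p P ≤ ENNReal.ofReal ((C * (t - s) ^ ν) ^ k))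

/-- `(y^{(0)},…,y^{(ℓ-1)})` is controlled by the rough path `x` in `L₂`,
with remainder constant `K₀`. -/
def Controlled (P : Measure Ω) (ν : ℝ) (ℓ : ℕ) (K₀ : ℝ)
    (x : ℕ → ℝ → ℝ → Ω → ℝ) (y : ℕ → ℝ → Ω → ℝ) : Prop :=
  (∀ k, k ≤ ℓ - 1 → ∀ t, Measurable (y k t)) ∧
  (∀ k, k ≤ ℓ - 1 → ∀ ω, ContinuousOn (fun t => y k t ω) (Set.Icc 0 1)) ∧
  (∀ ω, y 0 0 ω = 0) ∧
  (∀ k, k ≤ ℓ - 1 → ∀ s t : ℝ, 0 ≤ s → s ≤ t → t ≤ 1 →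
    eLpNorm (fun ω => y k t ω - y k s ω -
        ∑ j ∈ Finset.Icc 1 (ℓ - 1 - k), y (k + j) s ω * x j s t ω) 2 P
      ≤ ENNReal.ofReal (K₀ * (t - s) ^ (((ℓ - k : ℕ) : ℝ) * ν)))

/-- Covariance of one-dimensional fractional Brownian motion. -/
def fbmCov (ν s t : ℝ) : ℝ := (s ^ (2 * ν) + t ^ (2 * ν) - |t - s| ^ (2 * ν)) / 2

/-- `x` is a fractional Brownian motion with Hurst parameter `ν` on `[0,1]`:
a measurable process with (a.s.) continuous sample paths all of whose finite
linear combinations are centered Gaussian with the fBm covariance. -/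
def IsFBM (P : Measure Ω) (ν : ℝ) (x : ℝ → Ω → ℝ) : Prop :=
  (∀ t, Measurable (x t)) ∧
  (∀ᵐ ω ∂P, ContinuousOn (fun t => x t ω) (Set.Icc 0 1)) ∧
  ∀ (m : ℕ) (t : Fin m → ℝ), (∀ j, t j ∈ Set.Icc (0 : ℝ) 1) →
    ∀ a : Fin m → ℝ,
      P.map (fun ω => ∑ j, a j * x (t j) ω) =
        gaussianReal 0 (∑ j, ∑ k, a j * a k * fbmCov ν (t j) (t k)).toNNReal

/-- Correlation function of the increments of fBm. -/
def rho (ν : ℝ) (k : ℤ) : ℝ :=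
  (|(k : ℝ) + 1| ^ (2 * ν) + |(k : ℝ) - 1| ^ (2 * ν) - 2 * |(k : ℝ)| ^ (2 * ν)) / 2

/-- Hermite polynomial `H_q` (probabilists' normalization). -/
def Hq (q : ℕ) (t : ℝ) : ℝ := Polynomial.aeval t (Polynomial.hermite q)

/-- The increments `h^{n,q}_{t_k t_{k+1}} = H_q(n^ν δx_{t_k t_{k+1}})`. -/
def hermIncr (x : ℝ → Ω → ℝ) (ν : ℝ) (n q : ℕ) (k : ℕ) (ω : Ω) : ℝ :=
  Hq q ((n : ℝ) ^ ν * (x (((k : ℝ) + 1) / n) ω - x ((k : ℝ) / n) ω))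

/-- Canonical rough-path lift of a one-dimensional process: `x^i_{st} = (δx_{st})^i / i!`. -/
def xlift (x : ℝ → Ω → ℝ) (i : ℕ) (s t : ℝ) (ω : Ω) : ℝ :=
  (x t ω - x s ω) ^ i / (Nat.factorial i : ℝ)

/-- Hermite coefficient `a_q = (1/q!) ∫ f H_q dγ` of `f` in `L²(γ)`. -/
def hermCoeff (f : ℝ → ℝ) (q : ℕ) : ℝ :=
  (Nat.factorial q : ℝ)⁻¹ * ∫ t, f t * Hq q t ∂(gaussianReal 0 1)

/-- `c_p = E|N|^p = 2^{p/2} Γ((p+1)/2)/√π`. -/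
def cconst (r : ℝ) : ℝ := (2 : ℝ) ^ (r / 2) * Real.Gamma ((r + 1) / 2) / Real.sqrt Real.pi

/-! ### Concentration by rotation of Gaussian measures -/

lemma lintegral_pow_four_le {α : Type*} [MeasurableSpace α] (μ : Measure α) [IsProbabilityMeasure μ]
    {g : α → ℝ≥0∞} (hg : AEMeasurable g μ) : (∫⁻ a, g a ∂μ) ^ 4 ≤ ∫⁻ a, g a ^ 4 ∂μ := by
  have h := eLpNorm'_le_eLpNorm'_of_exponent_le (p := 1) (q := 4) (by norm_num) (by norm_num) μ
    hg.aestronglyMeasurable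
  simp only [eLpNorm', enorm_eq_self, ENNReal.rpow_one, div_one] at h
  calc _ ≤ ((∫⁻ a, g a ^ (4:ℝ) ∂μ) ^ (1 / (4:ℝ))) ^ 4 := by gcongr
    _ = _ := by
      rw [← ENNReal.rpow_natCast, ← ENNReal.rpow_mul]
      norm_num

lemma enorm_integral_pow_four_le {α : Type*} [MeasurableSpace α] (μ : Measure α)
    [IsProbabilityMeasure μ] {g : α → ℝ} (hg : AEMeasurable g μ) :
    ‖∫ a, g a ∂μ‖ₑ ^ 4 ≤ ∫⁻ a, ‖g a‖ₑ ^ 4 ∂μ := by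
  refine le_trans ?_ (lintegral_pow_four_le μ hg.enorm)
  gcongr
  exact enorm_integral_le_lintegral_enorm _

/-- Maurey-Pisier inequality for the fourth moment: if `x`, `y` are independent with the same
centered Gaussian law, then `E|F x - F y|⁴ ≤ (π/2)⁴ E|F'(x) y|⁴`. The increment `F y - F x` is the
integral of the derivative of `F` along the arc `cos θ • x + sin θ • y`, and the pair formed by the
point of the arc and its velocity is a rotation of `(x, y)`, hence has the same law as `(x, y)`. -/
lemma maurey_pisier {E : Type*} [NormedAddCommGroup E] [NormedSpace ℝ E] [MeasurableSpace E]
    [BorelSpace E] [SecondCountableTopology E] [CompleteSpace E] (μ : Measure E) [IsGaussian μ]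
    (hμ : ∀ L : StrongDual ℝ E, μ[L] = 0) (F : E → ℝ) (F' : E → E →L[ℝ] ℝ)
    (hF : ∀ x, HasFDerivAt F (F' x) x) (hF' : Continuous F') :
    ∫⁻ x, ∫⁻ y, ‖F x - F y‖ₑ ^ 4 ∂μ ∂μ ≤
      ENNReal.ofReal (Real.pi / 2) ^ 4 * ∫⁻ x, ∫⁻ y, ‖F' x y‖ₑ ^ 4 ∂μ ∂μ := by
  have hFc : Continuous F := continuous_iff_continuousAt.2 fun x => (hF x).continuousAt
  set ν₁ : Measure ℝ := volume.restrict (Set.Ioc 0 1) with hν₁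
  have : IsProbabilityMeasure ν₁ := ⟨by simp [hν₁]⟩
  set g : E × E → ℝ≥0∞ := fun q => ‖F' q.1 q.2‖ₑ ^ 4 with hg
  have hgc : Continuous g := by
    have : Continuous fun q : E × E => F' q.1 q.2 :=
      (hF'.comp continuous_fst).clm_apply continuous_snd
    exact (ENNReal.continuous_pow 4).comp this.enorm
  have hgm : Measurable g := hgc.measurable
  have hrot : Continuous fun r : (E × E) × ℝ =>
      ContinuousLinearMap.rotation (Real.pi / 2 * r.2) r.1 := by
    simp only [ContinuousLinearMap.rotation_apply]
    fun_prop
  -- the fundamental theorem of calculus along the circular arc from `x` to `y`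
  have key : ∀ x y : E, ‖F x - F y‖ₑ ^ 4 ≤ ENNReal.ofReal (Real.pi / 2) ^ 4 *
      ∫⁻ u, g (ContinuousLinearMap.rotation (Real.pi / 2 * u) (x, y)) ∂ν₁ := by
    intro x y
    set h : ℝ → ℝ := fun u => Real.pi / 2 *
      F' (ContinuousLinearMap.rotation (Real.pi / 2 * u) (x, y)).1
        (ContinuousLinearMap.rotation (Real.pi / 2 * u) (x, y)).2 with hh
    have hrot' : Continuous fun u : ℝ =>
        ContinuousLinearMap.rotation (Real.pi / 2 * u) (x, y) := by
      simp only [ContinuousLinearMap.rotation_apply]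
      fun_prop
    have hhc : Continuous h := by
      have := (hF'.comp (continuous_fst.comp hrot')).clm_apply (continuous_snd.comp hrot')
      exact continuous_const.mul this
    have hder : ∀ u : ℝ, HasDerivAt (fun u : ℝ => F (Real.cos (Real.pi / 2 * u) • x +
        Real.sin (Real.pi / 2 * u) • y)) (h u) u := by
      intro u
      have h0 : HasDerivAt (fun u : ℝ => Real.pi / 2 * u) (Real.pi / 2) u := by
        simpa using (hasDerivAt_id u).const_mul (Real.pi / 2)
      have h1 := (h0.cos.smul_const x).add (h0.sin.smul_const y)
      have h2 := (hF _).comp_hasDerivAt u h1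
      convert! h2 using 1
      simp only [hh, ContinuousLinearMap.rotation_apply]
      rw [← smul_eq_mul, ← map_smul]
      congr 1
      simp only [smul_add, smul_smul]
      congr 2 <;> ring
    have hftc : ∫ u, h u ∂ν₁ = F y - F x := by
      rw [hν₁, ← intervalIntegral.integral_of_le zero_le_one,
        intervalIntegral.integral_eq_sub_of_hasDerivAt (fun u _ => hder u)
          (hhc.intervalIntegrable _ _)]
      simp
    calc ‖F x - F y‖ₑ ^ 4 = ‖∫ u, h u ∂ν₁‖ₑ ^ 4 := by
          rw [hftc, ← enorm_neg (F x - F y)]; congr 2; ring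
      _ ≤ ∫⁻ u, ‖h u‖ₑ ^ 4 ∂ν₁ := enorm_integral_pow_four_le ν₁ hhc.measurable.aemeasurable
      _ = _ := by
          rw [← lintegral_const_mul]
          · refine lintegral_congr fun u => ?_
            rw [hh, enorm_mul, mul_pow, Real.enorm_eq_ofReal (by positivity)]
          · exact (hgc.comp hrot').measurable
  calc ∫⁻ x, ∫⁻ y, ‖F x - F y‖ₑ ^ 4 ∂μ ∂μ
      = ∫⁻ q, ‖F q.1 - F q.2‖ₑ ^ 4 ∂(μ.prod μ) := by
        rw [lintegral_prod]
        have : Continuous fun q : E × E => F q.1 - F q.2 := by fun_prop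
        exact ((ENNReal.continuous_pow 4).comp this.enorm).measurable.aemeasurable
    _ ≤ ∫⁻ q, ENNReal.ofReal (Real.pi / 2) ^ 4 *
          ∫⁻ u, g (ContinuousLinearMap.rotation (Real.pi / 2 * u) q) ∂ν₁ ∂(μ.prod μ) :=
        lintegral_mono fun q => key q.1 q.2
    _ = ENNReal.ofReal (Real.pi / 2) ^ 4 *
          ∫⁻ q, ∫⁻ u, g (ContinuousLinearMap.rotation (Real.pi / 2 * u) q) ∂ν₁ ∂(μ.prod μ) := by
        rw [lintegral_const_mul' _ _ (by simp)]
    _ = ENNReal.ofReal (Real.pi / 2) ^ 4 *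
          ∫⁻ u, ∫⁻ q, g (ContinuousLinearMap.rotation (Real.pi / 2 * u) q) ∂(μ.prod μ) ∂ν₁ := by
        rw [lintegral_lintegral_swap]
        exact (hgc.comp hrot).measurable.aemeasurable
    -- rotation invariance of `μ × μ` makes the inner integral independent of the angle
    _ = ENNReal.ofReal (Real.pi / 2) ^ 4 * ∫⁻ _u, ∫⁻ q, g q ∂(μ.prod μ) ∂ν₁ := by
        congr 1
        refine lintegral_congr fun u => ?_
        rw [← lintegral_map (f := g) hgm (ContinuousLinearMap.continuous _).measurable,
          IsGaussian.map_rotation_eq_self_of_forall_strongDual_eq_zero hμ]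
    _ = _ := by
        rw [lintegral_const, measure_univ, mul_one, lintegral_prod _ hgm.aemeasurable]

/-! ### Moments of the Gaussian law -/

lemma lintegral_gaussian_pow_four (v : ℝ≥0) :
    ∫⁻ y, ‖y‖ₑ ^ 4 ∂(gaussianReal 0 v) = (v : ℝ≥0∞) ^ 2 * ∫⁻ y, ‖y‖ₑ ^ 4 ∂(gaussianReal 0 1) := by
  have h : gaussianReal 0 v = (gaussianReal 0 1).map ((NNReal.sqrt v : ℝ) * ·) := by
    rw [gaussianReal_map_const_mul]
    simp
  rw [h, lintegral_map (by fun_prop) (by fun_prop), ← lintegral_const_mul _ (by fun_prop)]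
  refine lintegral_congr fun y => ?_
  rw [enorm_mul, mul_pow]
  congr 1
  rw [Real.enorm_eq_ofReal (by positivity), ENNReal.ofReal_coe_nnreal, ← ENNReal.coe_pow,
    ← ENNReal.coe_pow]
  congr 1
  calc NNReal.sqrt v ^ 4 = (NNReal.sqrt v ^ 2) ^ 2 := by ring
    _ = v ^ 2 := by rw [NNReal.sq_sqrt]

lemma lintegral_gaussian_rpow_lt_top {q : ℝ} (hq : 0 < q) :
    ∫⁻ y, ‖y‖ₑ ^ q ∂(gaussianReal 0 1) < ∞ := by
  have h := (memLp_id_gaussianReal' (μ := 0) (v := 1) (ENNReal.ofReal q) (by simp)).2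
  have := lintegral_rpow_enorm_lt_top_of_eLpNorm_lt_top (by simpa using hq) (by simp) h
  simpa [ENNReal.toReal_ofReal hq.le] using this

lemma integrable_abs_rpow_gaussian {q : ℝ} (hq : 0 < q) :
    Integrable (fun y : ℝ => |y| ^ q) (gaussianReal 0 1) := by
  have h := (memLp_id_gaussianReal' (μ := 0) (v := 1) (ENNReal.ofReal q) (by simp)).integrable_norm_rpow
    (by simpa using hq) (by simp)
  simpa [ENNReal.toReal_ofReal hq.le] using h

lemma integral_abs_rpow_gaussian {p : ℝ} (hp : 0 < p) :
    ∫ y, |y| ^ p ∂(gaussianReal 0 1) = cconst p := by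
  rw [integral_gaussianReal_eq_integral_smul one_ne_zero]
  have h0 : ∀ y : ℝ, gaussianPDFReal 0 1 y • |y| ^ p =
      (fun t : ℝ => (√(2 * Real.pi))⁻¹ * (t ^ p * Real.exp (-(1/2) * t ^ (2:ℝ)))) |y| := by
    intro y
    simp only [gaussianPDFReal_def, smul_eq_mul, NNReal.coe_one, sub_zero, mul_one]
    rw [Real.rpow_two, sq_abs, show -(1/2) * y^2 = -y^2/2 by ring]
    ring
  simp_rw [h0]
  rw [integral_comp_abs (f := fun t : ℝ => (√(2 * Real.pi))⁻¹ *
      (t ^ p * Real.exp (-(1/2) * t ^ (2:ℝ)))), integral_const_mul,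
    integral_rpow_mul_exp_neg_mul_rpow (by norm_num) (by linarith) (by norm_num)]
  rw [cconst, Real.sqrt_mul (by norm_num), one_div (2:ℝ), Real.inv_rpow (by norm_num),
    ← Real.rpow_neg (by norm_num), show -(-(p+1)/2) = p/2 + 1/2 by ring,
    Real.rpow_add (by norm_num), ← Real.sqrt_eq_rpow]
  have : √(2:ℝ) ≠ 0 := by positivity
  have : √Real.pi ≠ 0 := by positivity
  field_simp

/-! ### Fourth moment bound for weighted power sums -/

/-- Let `μ` be the law of a vector of standard Gaussians whose covariance form is at most `2 |a|²`
(hypothesis `hlin`, which also says that the vector is centered and jointly Gaussian). Then a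
weighted mean of the `|y k| ^ p` with weights bounded by one deviates from its expectation by
`O(n⁻²)` in fourth moment. -/
lemma moment_four_bound {n : ℕ} (μ : Measure (Fin n → ℝ)) [IsProbabilityMeasure μ]
    (hlin : ∀ a : Fin n → ℝ, ∃ v : ℝ≥0, μ.map (fun y => ∑ k, a k * y k) = gaussianReal 0 v ∧
      (v : ℝ) ≤ 2 * ∑ k, a k ^ 2)
    (hone : ∀ k, μ.map (fun y => y k) = gaussianReal 0 1)
    {p : ℝ} (hp : 1 < p) (w : Fin n → ℝ) (hw : ∀ k, |w k| ≤ 1) :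
    ∫⁻ y, ‖(1 / (n : ℝ)) * ∑ k, w k * |y k| ^ p - cconst p * ((1 / (n : ℝ)) * ∑ k, w k)‖ₑ ^ 4 ∂μ ≤
      ENNReal.ofReal (1 / (n : ℝ) ^ 2) * (ENNReal.ofReal (Real.pi / 2) ^ 4 *
        ((∫⁻ y, ‖y‖ₑ ^ 4 ∂(gaussianReal 0 1)) * (ENNReal.ofReal (4 * p ^ 4) *
          ∫⁻ y, ‖y‖ₑ ^ (4 * (p - 1)) ∂(gaussianReal 0 1)))) := by
  have hdual : ∀ L : StrongDual ℝ (Fin n → ℝ), (L : (Fin n → ℝ) → ℝ) =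
      fun y => ∑ k, L (Pi.single k 1) * y k := by
    intro L
    funext y
    conv_lhs => rw [← Finset.univ_sum_single y, map_sum]
    refine Finset.sum_congr rfl fun k _ => ?_
    rw [mul_comm, ← smul_eq_mul, ← map_smul, ← Pi.single_smul]
    simp
  have : IsGaussian μ := isGaussian_of_map_eq_gaussianReal fun L => by
    obtain ⟨v, hv, -⟩ := hlin fun k => L (Pi.single k 1)
    exact ⟨0, v, by rw [hdual L]; exact hv⟩
  have hcent : ∀ L : StrongDual ℝ (Fin n → ℝ), μ[L] = 0 := by
    intro L
    obtain ⟨v, hv, -⟩ := hlin fun k => L (Pi.single k 1)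
    rw [← hdual L] at hv
    have := integral_map (μ := μ) (φ := L) (f := fun x : ℝ => x)
      L.continuous.measurable.aemeasurable (by fun_prop)
    rw [← this, hv, integral_id_gaussianReal]
  set F : (Fin n → ℝ) → ℝ := fun y => (1 / (n : ℝ)) * ∑ k, w k * |y k| ^ p with hFdef
  -- the partial derivatives of `F`
  set c : (Fin n → ℝ) → Fin n → ℝ := fun y k =>
    (1 / (n : ℝ)) * (w k * (p * |y k| ^ (p - 2) * y k)) with hc
  set F' : (Fin n → ℝ) → (Fin n → ℝ) →L[ℝ] ℝ := fun y =>
    ∑ k, c y k • ContinuousLinearMap.proj (R := ℝ) (φ := fun _ : Fin n => ℝ) k with hF'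
  have hF'a : ∀ x y, F' x y = ∑ k, c x k * y k := by
    intro x y
    simp [hF']
  have hFd : ∀ x, HasFDerivAt F (F' x) x := by
    intro x
    have : ∀ k ∈ (Finset.univ : Finset (Fin n)), HasFDerivAt (fun y : Fin n → ℝ => w k * |y k| ^ p)
        ((w k * (p * |x k| ^ (p - 2) * x k)) •
          ContinuousLinearMap.proj (R := ℝ) (φ := fun _ : Fin n => ℝ) k) x := by
      intro k _
      have h1 := (hasDerivAt_abs_rpow (x k) hp).comp_hasFDerivAt x
        (hasFDerivAt_apply (𝕜 := ℝ) k x)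
      have h2 := h1.const_mul (w k)
      rw [smul_smul] at h2
      exact h2
    have h3 := (HasFDerivAt.fun_sum this).const_mul (1 / (n : ℝ))
    rw [Finset.smul_sum] at h3
    simp only [smul_smul] at h3
    exact h3
  have hdc : Continuous fun t : ℝ => p * |t| ^ (p - 2) * t := by
    have h1 : ContDiff ℝ 1 fun t : ℝ => ‖t‖ ^ p := contDiff_norm_rpow hp
    have h2 := h1.continuous_deriv le_rfl
    convert! h2 using 1
    funext t
    exact ((hasDerivAt_abs_rpow t hp).deriv).symm
  have hFc : Continuous F' := by
    refine continuous_finsetSum _ fun k _ => ?_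
    have hck : Continuous fun y => c y k := continuous_const.mul (continuous_const.mul (hdc.comp (continuous_apply k)))
    exact hck.smul continuous_const
  have hmp := maurey_pisier μ hcent F F' hFd hFc
  have hFm : Measurable F := (continuous_iff_continuousAt.2
    fun x => (hFd x).continuousAt).measurable
  have hint : ∀ k, Integrable (fun y : Fin n → ℝ => |y k| ^ p) μ ∧
      ∫ y, |y k| ^ p ∂μ = cconst p := by
    intro k
    have hm : Measurable fun y : Fin n → ℝ => y k := measurable_pi_apply k
    constructor
    · have := integrable_abs_rpow_gaussian (q := p) (by linarith)
      rw [← hone k] at this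
      exact this.comp_measurable hm
    · rw [← integral_abs_rpow_gaussian (p := p) (by linarith), ← hone k,
        integral_map hm.aemeasurable]
      exact (by fun_prop : Measurable fun y : ℝ => |y| ^ p).aestronglyMeasurable
  have hFi : Integrable F μ :=
    (integrable_finsetSum _ fun k _ => (hint k).1.const_mul (w k)).const_mul _
  have hFE : ∫ y, F y ∂μ = cconst p * ((1 / (n : ℝ)) * ∑ k, w k) := by
    rw [hFdef, integral_const_mul, integral_finsetSum _ fun k _ => (hint k).1.const_mul (w k)]
    simp_rw [integral_const_mul, (hint _).2]
    rw [← Finset.sum_mul]; ring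
  calc ∫⁻ y, ‖F y - cconst p * ((1 / (n : ℝ)) * ∑ k, w k)‖ₑ ^ 4 ∂μ
      ≤ ∫⁻ x, ∫⁻ y, ‖F x - F y‖ₑ ^ 4 ∂μ ∂μ := by
        -- Jensen: `F x - E F` is the mean of `F x - F y` over the independent copy `y`
        refine lintegral_mono fun x => ?_
        have : F x - cconst p * ((1 / (n : ℝ)) * ∑ k, w k) = ∫ y, (F x - F y) ∂μ := by
          rw [integral_sub (integrable_const _) hFi, hFE]; simp
        rw [this]
        exact enorm_integral_pow_four_le μ (by fun_prop)
    _ ≤ _ := hmp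
    _ ≤ ENNReal.ofReal (Real.pi / 2) ^ 4 * ∫⁻ x, ((∫⁻ y, ‖y‖ₑ ^ 4 ∂(gaussianReal 0 1)) *
          (ENNReal.ofReal (4 * p ^ 4 * (1 / (n : ℝ) ^ 3)) *
            ∑ k, ‖x k‖ₑ ^ (4 * (p - 1)))) ∂μ := by
        gcongr with x
        -- for fixed `x`, `F' x y` is a centered Gaussian of variance `v ≤ 2 ∑ (c x k)²`
        obtain ⟨v, hv, hvle⟩ := hlin (c x)
        have hpush : ∫⁻ y, ‖F' x y‖ₑ ^ 4 ∂μ = ∫⁻ y, ‖y‖ₑ ^ 4 ∂(gaussianReal 0 v) := by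
          rw [← hv, lintegral_map (by fun_prop) (by fun_prop)]
          simp_rw [hF'a]
        rw [hpush, lintegral_gaussian_pow_four, mul_comm]
        gcongr
        have hck : ∀ k, c x k ^ 4 ≤ (p / n) ^ 4 * |x k| ^ (4 * (p - 1)) := by
          intro k
          have habs : |c x k| ≤ (p / n) * |x k| ^ (p - 1) := by
            have e : |x k| ^ (p - 2) * |x k| = |x k| ^ (p - 1) := by
              rcases eq_or_ne (x k) 0 with h0 | h0
              · rw [h0, abs_zero, mul_zero, Real.zero_rpow (by linarith)]
              · have := Real.rpow_add_one (abs_ne_zero.2 h0) (p - 2)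
                rw [← this]; congr 1; ring
            have hp0 : 0 < p := by linarith
            simp only [hc, abs_mul, abs_div, abs_one, Nat.abs_cast, abs_of_pos hp0]
            rw [abs_of_nonneg (Real.rpow_nonneg (abs_nonneg _) _), mul_assoc p, e]
            calc 1 / (n : ℝ) * (|w k| * (p * |x k| ^ (p - 1)))
                ≤ 1 / (n : ℝ) * (1 * (p * |x k| ^ (p - 1))) := by
                  gcongr; exact hw k
              _ = _ := by ring
          calc c x k ^ 4 = |c x k| ^ 4 := by rw [Even.pow_abs (by decide)]
            _ ≤ ((p / n) * |x k| ^ (p - 1)) ^ 4 := by gcongr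
            _ = _ := by
              rw [mul_pow]
              congr 1
              rw [← Real.rpow_natCast, ← Real.rpow_mul (abs_nonneg _)]
              congr 1; push_cast; ring
        have hreal : (v : ℝ) ^ 2 ≤ 4 * p ^ 4 * (1 / (n : ℝ) ^ 3) * ∑ k, |x k| ^ (4 * (p - 1)) := by
          have hcs : (∑ k, c x k ^ 2) ^ 2 ≤ n * ∑ k, c x k ^ 4 := by
            have := sq_sum_le_card_mul_sum_sq (s := (Finset.univ : Finset (Fin n)))
              (f := fun k => c x k ^ 2)
            simpa [← pow_mul] using this
          calc (v : ℝ) ^ 2 ≤ (2 * ∑ k, c x k ^ 2) ^ 2 := by gcongr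
            _ = 4 * (∑ k, c x k ^ 2) ^ 2 := by ring
            _ ≤ 4 * (n * ∑ k, (p / n) ^ 4 * |x k| ^ (4 * (p - 1))) := by
              gcongr with k
              exact hcs.trans (by gcongr with k; exact hck k)
            _ = _ := by
              rw [← Finset.mul_sum]
              rcases eq_or_ne n 0 with h0 | h0
              · subst h0; simp
              · have : (n : ℝ) ≠ 0 := by exact_mod_cast h0
                field_simp
        have hsum : ∑ k, ‖x k‖ₑ ^ (4 * (p - 1)) =
            ENNReal.ofReal (∑ k, |x k| ^ (4 * (p - 1))) := by
          rw [ENNReal.ofReal_sum_of_nonneg fun k _ => Real.rpow_nonneg (abs_nonneg _) _]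
          refine Finset.sum_congr rfl fun k _ => ?_
          rw [← ofReal_norm, ENNReal.ofReal_rpow_of_nonneg (norm_nonneg _) (by linarith),
            Real.norm_eq_abs]
        rw [hsum, ← ENNReal.ofReal_mul (by positivity), ← ENNReal.ofReal_coe_nnreal,
          ← ENNReal.ofReal_pow (by positivity)]
        exact ENNReal.ofReal_le_ofReal hreal
    _ = _ := by
        have hm4 : ∫⁻ y, ‖y‖ₑ ^ 4 ∂(gaussianReal 0 1) ≠ ∞ := by
          have := lintegral_gaussian_rpow_lt_top (q := (4 : ℕ)) (by norm_num)
          simp only [ENNReal.rpow_natCast] at this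
          exact this.ne
        rw [lintegral_const_mul' _ _ hm4, lintegral_const_mul' _ _ (by simp),
          lintegral_finsetSum _ (fun k _ => by fun_prop)]
        have : ∀ k : Fin n, ∫⁻ y, ‖y k‖ₑ ^ (4 * (p - 1)) ∂μ =
            ∫⁻ y, ‖y‖ₑ ^ (4 * (p - 1)) ∂(gaussianReal 0 1) := by
          intro k
          rw [← hone k, lintegral_map (by fun_prop) (by fun_prop)]
        simp_rw [this]
        rw [Finset.sum_const, Finset.card_univ, Fintype.card_fin, nsmul_eq_mul]
        have hn : ENNReal.ofReal (4 * p ^ 4 * (1 / (n : ℝ) ^ 3)) * (n : ℝ≥0∞) =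
            ENNReal.ofReal (1 / (n : ℝ) ^ 2) * ENNReal.ofReal (4 * p ^ 4) := by
          rw [← ENNReal.ofReal_natCast, ← ENNReal.ofReal_mul (by positivity),
            ← ENNReal.ofReal_mul (by positivity)]
          congr 1
          rcases eq_or_ne n 0 with h0 | h0
          · subst h0; simp
          · have : (n : ℝ) ≠ 0 := by exact_mod_cast h0
            field_simp
        rw [← mul_assoc (ENNReal.ofReal (4 * p ^ 4 * _)), hn]
        ring

/-! ### Covariance of the increments -/

/-- A symmetric matrix with unit diagonal, nonpositive off-diagonal entries and nonnegative row sums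
is diagonally dominant, so that its quadratic form is at most twice the Euclidean one. -/
lemma quad_form_le {n : ℕ} (R : Fin n → Fin n → ℝ) (hsymm : ∀ j k, R j k = R k j)
    (hdiag : ∀ j, R j j = 1) (hoff : ∀ j k, j ≠ k → R j k ≤ 0) (hrow : ∀ j, 0 ≤ ∑ k, R j k)
    (a : Fin n → ℝ) : ∑ j, ∑ k, a j * a k * R j k ≤ 2 * ∑ k, a k ^ 2 := by
  have h1 : ∀ j k, a j * a k * R j k ≤
      (a j ^ 2 + a k ^ 2) / 2 * ((if j = k then 2 else 0) - R j k) := by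
    intro j k
    split_ifs with h
    · subst h; rw [hdiag]; nlinarith
    · nlinarith [hoff j k h, mul_nonneg (sq_nonneg (a j + a k)) (neg_nonneg.2 (hoff j k h))]
  have h2 : ∑ j, ∑ k, a j ^ 2 * R j k = ∑ j, ∑ k, a k ^ 2 * R j k := by
    rw [Finset.sum_comm]
    exact Finset.sum_congr rfl fun k _ => Finset.sum_congr rfl fun j _ => by rw [hsymm]
  calc ∑ j, ∑ k, a j * a k * R j k
      ≤ ∑ j, ∑ k, (a j ^ 2 + a k ^ 2) / 2 * ((if j = k then 2 else 0) - R j k) :=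
        Finset.sum_le_sum fun j _ => Finset.sum_le_sum fun k _ => h1 j k
    _ = 2 * ∑ k, a k ^ 2 - (∑ j, ∑ k, a j ^ 2 * R j k + ∑ j, ∑ k, a k ^ 2 * R j k) / 2 := by
        simp only [mul_sub, Finset.sum_sub_distrib, mul_ite, mul_zero, Finset.sum_ite_eq,
          Finset.mem_univ, if_true, add_div, add_mul, Finset.sum_add_distrib, Finset.sum_div,
          Finset.mul_sum]
        congr 1
        · rw [← Finset.sum_add_distrib]
          exact Finset.sum_congr rfl fun j _ => by ring
        · congr 1 <;> exact Finset.sum_congr rfl fun j _ => Finset.sum_congr rfl fun k _ => by ring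
    _ = 2 * ∑ k, a k ^ 2 - ∑ j, a j ^ 2 * ∑ k, R j k := by
        rw [← h2]; simp_rw [Finset.mul_sum]; ring
    _ ≤ _ := by
        have : 0 ≤ ∑ j, a j ^ 2 * ∑ k, R j k :=
          Finset.sum_nonneg fun j _ => mul_nonneg (sq_nonneg _) (hrow j)
        linarith

lemma rho_zero {ν : ℝ} (hν : 0 < ν) : rho ν 0 = 1 := by
  have : (2 * ν) ≠ 0 := by positivity
  simp [rho, Real.zero_rpow this]

lemma rho_neg (ν : ℝ) (d : ℤ) : rho ν (-d) = rho ν d := by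
  simp only [rho, Int.cast_neg, abs_neg]
  rw [show -(d:ℝ) + 1 = -((d:ℝ) - 1) by ring, show -(d:ℝ) - 1 = -((d:ℝ) + 1) by ring, abs_neg,
    abs_neg, add_comm (|(d:ℝ) - 1| ^ (2 * ν))]

/-- Increments over disjoint intervals are nonpositively correlated when `ν ≤ 1/2`, because
`t ↦ t ^ (2ν)` is concave on `[0, ∞)`. -/
lemma rho_nonpos {ν : ℝ} (hν : 0 < ν) (hν2 : ν ≤ 1 / 2) {d : ℤ} (hd : d ≠ 0) : rho ν d ≤ 0 := by
  wlog h : 0 < d generalizing d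
  · rw [← rho_neg]
    exact this (neg_ne_zero.2 hd) (by omega)
  have h1 : (1:ℝ) ≤ d := by exact_mod_cast h
  have hcv : ConcaveOn ℝ (Set.Ici 0) fun t : ℝ => t ^ (2 * ν) :=
    Real.concaveOn_rpow (by linarith) (by linarith)
  have hc := hcv.2 (show (d:ℝ) - 1 ∈ Set.Ici 0 from sub_nonneg.2 h1)
    (show (d:ℝ) + 1 ∈ Set.Ici 0 from Set.mem_Ici.2 (by linarith))
    (show (0:ℝ) ≤ 1 / 2 by norm_num) (show (0:ℝ) ≤ 1 / 2 by norm_num) (by norm_num)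
  simp only [smul_eq_mul] at hc
  rw [show (1/2 : ℝ) * (d - 1) + 1/2 * (d + 1) = d by ring] at hc
  rw [rho, abs_of_nonneg (by linarith), abs_of_nonneg (by linarith), abs_of_nonneg (by linarith)]
  linarith

/-- The covariance of the increments of fractional Brownian motion over `[t_j, t_{j+1}]` and
`[t_k, t_{k+1}]`, where `t_i = i / n`. -/
def incrCov (ν : ℝ) (n : ℕ) (j k : ℕ) : ℝ :=
  fbmCov ν (((j : ℝ) + 1) / n) (((k : ℝ) + 1) / n) - fbmCov ν (((j : ℝ) + 1) / n) ((k : ℝ) / n)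
    - fbmCov ν ((j : ℝ) / n) (((k : ℝ) + 1) / n) + fbmCov ν ((j : ℝ) / n) ((k : ℝ) / n)

/-- Self-similarity and stationarity: after normalization by `n ^ ν` the covariance depends on the
difference of the indices only. -/
lemma incrCov_eq {ν : ℝ} {n : ℕ} (hn : 0 < n) (j k : ℕ) :
    ((n : ℝ) ^ ν) ^ 2 * incrCov ν n j k = rho ν ((j : ℤ) - k) := by
  have hn' : (0:ℝ) < n := by exact_mod_cast hn
  have hs : ∀ u v : ℝ, ((n : ℝ) ^ ν) ^ 2 * |u / n - v / n| ^ (2 * ν) = |u - v| ^ (2 * ν) := by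
    intro u v
    rw [← sub_div, abs_div, Nat.abs_cast, Real.div_rpow (abs_nonneg _) hn'.le,
      ← Real.rpow_natCast, ← Real.rpow_mul hn'.le, mul_comm ν]
    have : (n:ℝ) ^ (2 * ν) ≠ 0 := (Real.rpow_pos_of_pos hn' _).ne'
    push_cast
    field_simp
  have e : ((n : ℝ) ^ ν) ^ 2 * incrCov ν n j k =
      (((n : ℝ) ^ ν) ^ 2 * |(k : ℝ) / n - ((j : ℝ) + 1) / n| ^ (2 * ν)
        + ((n : ℝ) ^ ν) ^ 2 * |((k : ℝ) + 1) / n - (j : ℝ) / n| ^ (2 * ν)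
        - ((n : ℝ) ^ ν) ^ 2 * |((k : ℝ) + 1) / n - ((j : ℝ) + 1) / n| ^ (2 * ν)
        - ((n : ℝ) ^ ν) ^ 2 * |(k : ℝ) / n - (j : ℝ) / n| ^ (2 * ν)) / 2 := by
    simp only [incrCov, fbmCov]; ring
  rw [e, hs, hs, hs, hs, rho]
  push_cast
  rw [abs_sub_comm (k : ℝ) (j + 1), abs_sub_comm ((k : ℝ) + 1) j, abs_sub_comm ((k : ℝ) + 1) (j + 1),
    abs_sub_comm (k : ℝ) j, show (j : ℝ) + 1 - (k + 1) = j - k by ring,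
    show (j : ℝ) + 1 - k = j - k + 1 by ring, show (j : ℝ) - (k + 1) = j - k - 1 by ring]
  ring

/-- The row sum telescopes to the covariance of the `j`-th increment with `x_1 - x_0`, which is
nonnegative because `s ↦ s ^ (2ν) - (1 - s) ^ (2ν)` is increasing. -/
lemma incrCov_row_nonneg {ν : ℝ} (hν : 0 < ν) {n : ℕ} (j : ℕ) (hj : j < n) :
    0 ≤ ∑ k ∈ Finset.range n, incrCov ν n j k := by
  have hn' : (0:ℝ) < n := by exact_mod_cast (by omega : 0 < n)
  have htel : ∀ s : ℝ, ∑ k ∈ Finset.range n,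
      (fbmCov ν s (((k : ℝ) + 1) / n) - fbmCov ν s ((k : ℝ) / n)) =
        fbmCov ν s 1 - fbmCov ν s 0 := by
    intro s
    have := Finset.sum_range_sub (fun k : ℕ => fbmCov ν s ((k : ℝ) / n)) n
    push_cast at this
    rw [this, div_self hn'.ne', zero_div]
  have e : ∑ k ∈ Finset.range n, incrCov ν n j k =
      (fbmCov ν (((j : ℝ) + 1) / n) 1 - fbmCov ν (((j : ℝ) + 1) / n) 0) -
      (fbmCov ν ((j : ℝ) / n) 1 - fbmCov ν ((j : ℝ) / n) 0) := by
    rw [← htel, ← htel, ← Finset.sum_sub_distrib]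
    exact Finset.sum_congr rfl fun k _ => by simp only [incrCov]; ring
  have hj0 : (0:ℝ) ≤ (j : ℝ) / n := by positivity
  have hj1 : (j : ℝ) / n ≤ ((j : ℝ) + 1) / n := by gcongr; linarith
  have hj2 : ((j : ℝ) + 1) / n ≤ 1 := by
    rw [div_le_one hn']; exact_mod_cast hj
  rw [e]
  simp only [fbmCov]
  rw [abs_of_nonneg (by linarith), abs_of_nonpos (by linarith), abs_of_nonneg (by linarith),
    abs_of_nonpos (by linarith)]
  have h2 : 0 < 2 * ν := by linarith
  have m1 : ((j : ℝ) / n) ^ (2 * ν) ≤ (((j : ℝ) + 1) / n) ^ (2 * ν) :=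
    Real.rpow_le_rpow hj0 hj1 h2.le
  have m2 : (1 - ((j : ℝ) + 1) / n) ^ (2 * ν) ≤ (1 - (j : ℝ) / n) ^ (2 * ν) :=
    Real.rpow_le_rpow (by linarith) (by linarith) h2.le
  simp only [zero_sub, neg_neg]
  linarith

/-- The law of a linear combination of the normalized increments. -/
lemma map_increments {Ω : Type*} [MeasurableSpace Ω] {P : Measure Ω} {ν : ℝ} {x : ℝ → Ω → ℝ}
    (hx : IsFBM P ν x) {n : ℕ} (hn : 0 < n) (a : Fin n → ℝ) :
    P.map (fun ω => ∑ k : Fin n,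
        a k * ((n : ℝ) ^ ν * (x (((k : ℕ) + 1 : ℝ) / n) ω - x (((k : ℕ) : ℝ) / n) ω))) =
      gaussianReal 0 (∑ j : Fin n, ∑ k : Fin n,
        a j * a k * rho ν (((j : ℕ) : ℤ) - ((k : ℕ) : ℤ))).toNNReal := by
  have hn' : (0:ℝ) < n := by exact_mod_cast hn
  set b : Fin n → ℝ := fun k => a k * (n : ℝ) ^ ν with hb
  -- the combination of increments is one of values of `x`: coefficients `b` at the right endpoints
  -- and `-b` at the left endpoints
  have h := hx.2.2 (n + n) (Fin.append (fun k : Fin n => ((k : ℕ) + 1 : ℝ) / n)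
    (fun k : Fin n => ((k : ℕ) : ℝ) / n)) (by
      intro j
      refine Fin.addCases (fun k => ?_) (fun k => ?_) j
      · rw [Fin.append_left]
        have : ((k : ℕ) + 1 : ℝ) ≤ n := by exact_mod_cast k.2
        exact ⟨by positivity, by rwa [div_le_one hn']⟩
      · rw [Fin.append_right]
        have : ((k : ℕ) : ℝ) ≤ n := by exact_mod_cast k.2.le
        exact ⟨by positivity, by rwa [div_le_one hn']⟩) (Fin.append b (fun k => - b k))
  simp only [Fin.sum_univ_add, Fin.append_left, Fin.append_right] at h
  convert! h using 2
  · funext ω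
    rw [← Finset.sum_add_distrib]
    exact Finset.sum_congr rfl fun k _ => by simp only [hb]; ring
  · congr 1
    simp only [← Finset.sum_add_distrib]
    refine Finset.sum_congr rfl fun j _ => Finset.sum_congr rfl fun k _ => ?_
    rw [← incrCov_eq hn, incrCov]
    simp only [hb]; ring

/-! ### Almost sure convergence of weighted power variations -/

/-- Strong law for the weighted `p`-variations of fractional Brownian motion with `ν ≤ 1/2`: since
the fourth moments of the deviations are summable in `n`, the deviations tend to zero almost
surely. -/
lemma increments_ae_tendsto {Ω : Type*} [MeasurableSpace Ω] {P : Measure Ω} [IsProbabilityMeasure P]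
    {ν : ℝ} (hν : 0 < ν) (hν2 : ν ≤ 1 / 2) {x : ℝ → Ω → ℝ} (hx : IsFBM P ν x) {p : ℝ} (hp : 1 < p)
    (w : ℕ → ℕ → ℝ) (hw : ∀ n k, k < n → |w n k| ≤ 1) :
    ∀ᵐ ω ∂P, Tendsto (fun n : ℕ => (1 / (n : ℝ)) * ∑ k ∈ Finset.range n,
        w n k * |(n : ℝ) ^ ν * (x (((k : ℝ) + 1) / n) ω - x ((k : ℝ) / n) ω)| ^ p -
      cconst p * ((1 / (n : ℝ)) * ∑ k ∈ Finset.range n, w n k)) atTop (nhds 0) := by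
  set D : ℕ → Ω → ℝ := fun n ω => (1 / (n : ℝ)) * ∑ k ∈ Finset.range n,
        w n k * |(n : ℝ) ^ ν * (x (((k : ℝ) + 1) / n) ω - x ((k : ℝ) / n) ω)| ^ p -
      cconst p * ((1 / (n : ℝ)) * ∑ k ∈ Finset.range n, w n k) with hD
  set K : ℝ≥0∞ := ENNReal.ofReal (Real.pi / 2) ^ 4 *
        ((∫⁻ y, ‖y‖ₑ ^ 4 ∂(gaussianReal 0 1)) * (ENNReal.ofReal (4 * p ^ 4) *
          ∫⁻ y, ‖y‖ₑ ^ (4 * (p - 1)) ∂(gaussianReal 0 1))) with hK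
  have hKtop : K ≠ ∞ := by
    have h4 : ∫⁻ y, ‖y‖ₑ ^ 4 ∂(gaussianReal 0 1) ≠ ∞ := by
      have := lintegral_gaussian_rpow_lt_top (q := (4 : ℕ)) (by norm_num)
      simp only [ENNReal.rpow_natCast] at this
      exact this.ne
    have h5 := (lintegral_gaussian_rpow_lt_top (q := 4 * (p - 1)) (by linarith)).ne
    exact ENNReal.mul_ne_top (by simp) (ENNReal.mul_ne_top h4
      (ENNReal.mul_ne_top ENNReal.ofReal_ne_top h5))
  have hmx : ∀ t, Measurable (x t) := hx.1
  have hDm : ∀ n, Measurable (D n) := by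
    intro n
    simp only [hD]
    fun_prop
  have hbound : ∀ n, ∫⁻ ω, ‖D n ω‖ₑ ^ 4 ∂P ≤ ENNReal.ofReal (1 / (n : ℝ) ^ 2) * K := by
    intro n
    rcases Nat.eq_zero_or_pos n with h0 | hn
    · subst h0; simp [hD]
    set ξ : Ω → Fin n → ℝ := fun ω k =>
      (n : ℝ) ^ ν * (x (((k : ℕ) + 1 : ℝ) / n) ω - x (((k : ℕ) : ℝ) / n) ω) with hξ
    have hξm : Measurable ξ := measurable_pi_lambda _ fun k => by simp only [hξ]; fun_prop
    have : IsProbabilityMeasure (P.map ξ) := Measure.isProbabilityMeasure_map hξm.aemeasurable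
    have hmap : ∀ a : Fin n → ℝ, (P.map ξ).map (fun y => ∑ k, a k * y k) =
        gaussianReal 0 (∑ j : Fin n, ∑ k : Fin n,
          a j * a k * rho ν (((j : ℕ) : ℤ) - ((k : ℕ) : ℤ))).toNNReal := by
      intro a
      rw [Measure.map_map (by fun_prop) hξm, ← map_increments hx hn a]
      rfl
    have hlin : ∀ a : Fin n → ℝ, ∃ v : ℝ≥0,
        (P.map ξ).map (fun y => ∑ k, a k * y k) = gaussianReal 0 v ∧
          (v : ℝ) ≤ 2 * ∑ k, a k ^ 2 := by
      intro a
      refine ⟨_, hmap a, ?_⟩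
      rw [Real.coe_toNNReal']
      refine max_le (quad_form_le _ ?_ ?_ ?_ ?_ a) (by positivity)
      · intro j k; rw [← rho_neg, neg_sub]
      · intro j; rw [sub_self, rho_zero hν]
      · intro j k hjk
        refine rho_nonpos hν hν2 ?_
        have : (j : ℕ) ≠ k := fun h => hjk (Fin.ext h)
        omega
      · intro j
        simp_rw [← incrCov_eq hn]
        rw [← Finset.mul_sum, Fin.sum_univ_eq_sum_range (fun k => incrCov ν n j k)]
        exact mul_nonneg (sq_nonneg _) (incrCov_row_nonneg hν _ j.2)
    have hone : ∀ k, (P.map ξ).map (fun y => y k) = gaussianReal 0 1 := by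
      intro k
      have := hmap (Pi.single k 1)
      simpa [Pi.single_apply, rho_zero hν] using this
    have hb := moment_four_bound (P.map ξ) hlin hone hp (fun k : Fin n => w n k)
      (fun k => hw n k k.2)
    rw [lintegral_map (by fun_prop) hξm] at hb
    refine le_trans (le_of_eq (lintegral_congr fun ω => ?_)) hb
    simp only [hD, hξ]
    rw [Fin.sum_univ_eq_sum_range (fun k => w n k),
      Fin.sum_univ_eq_sum_range (fun k : ℕ => w n k *
        |(n : ℝ) ^ ν * (x (((k : ℝ) + 1) / n) ω - x ((k : ℝ) / n) ω)| ^ p)]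
  have hsum : ∫⁻ ω, ∑' n, ‖D n ω‖ₑ ^ 4 ∂P ≠ ∞ := by
    rw [lintegral_tsum fun n => ((hDm n).enorm.pow_const 4).aemeasurable]
    refine ne_top_of_le_ne_top ?_ (ENNReal.tsum_le_tsum hbound)
    rw [ENNReal.tsum_mul_right, ← ENNReal.ofReal_tsum_of_nonneg (fun n => by positivity)
      (Real.summable_one_div_nat_pow.2 (by norm_num))]
    exact ENNReal.mul_ne_top (by simp) hKtop
  filter_upwards [ae_lt_top (Measurable.tsum fun n => (hDm n).enorm.pow_const 4) hsum]
    with ω hω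
  have h1 := ENNReal.tendsto_atTop_zero_of_tsum_ne_top hω.ne
  have h2 : Tendsto (fun n => ‖D n ω‖ₑ) atTop (nhds 0) := by
    have := h1.ennrpow_const (1 / 4 : ℝ)
    simp only [← ENNReal.rpow_natCast, ← ENNReal.rpow_mul] at this
    norm_num at this
    exact this
  exact tendsto_zero_iff_enorm_tendsto_zero.2 h2

/-! ### Riemann sums and polynomial approximation -/

/-- Riemann sums of the monotone function `t ^ i`. -/
lemma tendsto_power_sum (i : ℕ) :
    Tendsto (fun n : ℕ => (1 / (n : ℝ)) * ∑ k ∈ Finset.range n, ((k : ℝ) / n) ^ i) atTop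
      (nhds (∫ t in (0 : ℝ)..1, t ^ i)) := by
  have hI : ∫ t in (0 : ℝ)..1, t ^ i = 1 / (i + 1) := by simp
  rw [hI]
  have hmono : ∀ n : ℕ, MonotoneOn (fun t : ℝ => t ^ i) (Set.Icc 0 (0 + n)) :=
    fun n s hs t _ hst => pow_le_pow_left₀ hs.1 hst i
  have hscale : ∀ n : ℕ, 0 < n → (1 / (n : ℝ)) * ∑ k ∈ Finset.range n, ((k : ℝ) / n) ^ i =
      (∑ k ∈ Finset.range n, (k : ℝ) ^ i) / (n : ℝ) ^ (i + 1) := by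
    intro n hn
    simp_rw [div_pow]
    rw [← Finset.sum_div, pow_succ']
    have : (n : ℝ) ≠ 0 := by positivity
    field_simp
  have hlow : Tendsto (fun n : ℕ => 1 / ((i : ℝ) + 1) - 1 / (n : ℝ)) atTop
      (nhds (1 / ((i : ℝ) + 1))) := by
    simpa using (tendsto_const_nhds (x := 1 / ((i : ℝ) + 1))).sub
      (tendsto_one_div_atTop_nhds_zero_nat (𝕜 := ℝ))
  refine tendsto_of_tendsto_of_tendsto_of_le_of_le' hlow tendsto_const_nhds ?_ ?_
  · filter_upwards [eventually_gt_atTop 0] with n hn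
    have hn' : (0 : ℝ) < n := by exact_mod_cast hn
    have h := (hmono n).integral_le_sum
    simp only [zero_add, integral_pow] at h
    have hs := Finset.sum_range_succ' (fun k : ℕ => (k : ℝ) ^ i) n
    rw [Finset.sum_range_succ] at hs
    have h0 : (0 : ℝ) ≤ ((0 : ℕ) : ℝ) ^ i := by positivity
    have hz : (0 : ℝ) ^ (i + 1) = 0 := by simp
    rw [hz, sub_zero] at h
    rw [hscale n hn, le_div_iff₀ (by positivity)]
    have : (1 / ((i : ℝ) + 1) - 1 / (n : ℝ)) * (n : ℝ) ^ (i + 1) =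
        (n : ℝ) ^ (i + 1) / (i + 1) - (n : ℝ) ^ i := by
      rw [pow_succ]; field_simp
    linarith
  · filter_upwards [eventually_gt_atTop 0] with n hn
    have hn' : (0 : ℝ) < n := by exact_mod_cast hn
    have h := (hmono n).sum_le_integral
    simp only [zero_add, integral_pow] at h
    have hz : (0 : ℝ) ^ (i + 1) = 0 := by simp
    rw [hz, sub_zero] at h
    rw [hscale n hn, div_le_iff₀ (by positivity)]
    linarith [show (1 / ((i : ℝ) + 1)) * (n : ℝ) ^ (i + 1) = (n : ℝ) ^ (i + 1) / (i + 1) by ring]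

/-- If nonnegative masses `m n k / n` at the points `k / n` converge on every monomial to `c` times
Lebesgue measure on `[0, 1]`, then they do so on every function continuous on `[0, 1]`. The case
`i = 0` bounds the total mass, and the Weierstrass theorem does the rest. -/
lemma tendsto_weighted_of_monomials (m : ℕ → ℕ → ℝ) (hm : ∀ n k, 0 ≤ m n k) (c : ℝ)
    (h : ∀ i : ℕ, Tendsto (fun n : ℕ => (1 / (n : ℝ)) * ∑ k ∈ Finset.range n,
      ((k : ℝ) / n) ^ i * m n k) atTop (nhds (c * ∫ t in (0 : ℝ)..1, t ^ i)))
    (f : ℝ → ℝ) (hf : ContinuousOn f (Set.Icc 0 1)) :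
    Tendsto (fun n : ℕ => (1 / (n : ℝ)) * ∑ k ∈ Finset.range n, f ((k : ℝ) / n) * m n k) atTop
      (nhds (c * ∫ t in (0 : ℝ)..1, f t)) := by
  have hpoly : ∀ q : Polynomial ℝ, Tendsto (fun n : ℕ => (1 / (n : ℝ)) * ∑ k ∈ Finset.range n,
      q.eval ((k : ℝ) / n) * m n k) atTop (nhds (c * ∫ t in (0 : ℝ)..1, q.eval t)) := by
    intro q
    induction q using Polynomial.induction_on' with
    | add q r hq hr =>
      simp only [Polynomial.eval_add, add_mul, Finset.sum_add_distrib, mul_add]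
      rw [intervalIntegral.integral_add (q.continuous.intervalIntegrable _ _)
        (r.continuous.intervalIntegrable _ _), mul_add]
      exact hq.add hr
    | monomial i a =>
      simp only [Polynomial.eval_monomial]
      rw [intervalIntegral.integral_const_mul]
      have := (h i).const_mul a
      convert! this using 2
      · simp_rw [Finset.mul_sum]
        exact Finset.sum_congr rfl fun k _ => by ring
      · ring
  have hmass : ∀ᶠ n : ℕ in atTop, (1 / (n : ℝ)) * ∑ k ∈ Finset.range n, m n k < |c| + 1 := by
    have h0 := h 0
    simp only [pow_zero, one_mul, intervalIntegral.integral_const, sub_zero, smul_eq_mul,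
      mul_one] at h0
    exact h0.eventually_lt_const (by linarith [le_abs_self c])
  rw [Metric.tendsto_nhds]
  intro ε hε
  have hc : 0 < |c| + 1 := by positivity
  set δ := ε / (3 * (|c| + 1)) with hδ
  have hδ0 : 0 < δ := by positivity
  have hδc : δ * (|c| + 1) = ε / 3 := by rw [hδ]; field_simp
  obtain ⟨q, hq⟩ := exists_polynomial_near_of_continuousOn 0 1 f hf δ hδ0
  have hint : |(∫ t in (0 : ℝ)..1, q.eval t) - ∫ t in (0 : ℝ)..1, f t| ≤ δ := by
    have hfi : IntervalIntegrable f volume 0 1 := by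
      apply ContinuousOn.intervalIntegrable
      rwa [Set.uIcc_of_le zero_le_one]
    rw [← intervalIntegral.integral_sub (q.continuous.intervalIntegrable _ _) hfi]
    have := intervalIntegral.norm_integral_le_of_norm_le_const (a := (0:ℝ)) (b := 1) (C := δ)
      (f := fun t => q.eval t - f t) (fun t ht => by
        rw [Set.uIoc_of_le zero_le_one] at ht
        exact (hq t ⟨ht.1.le, ht.2⟩).le)
    simpa using this
  filter_upwards [hmass, (Metric.tendsto_nhds.1 (hpoly q)) (ε / 3) (by positivity)] with n hn1 hn2
  rw [Real.dist_eq] at hn2 ⊢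
  have h1 : |(1 / (n : ℝ)) * ∑ k ∈ Finset.range n, f ((k : ℝ) / n) * m n k -
      (1 / (n : ℝ)) * ∑ k ∈ Finset.range n, q.eval ((k : ℝ) / n) * m n k| ≤ ε / 3 := by
    rw [← mul_sub, ← Finset.sum_sub_distrib, abs_mul, abs_of_nonneg (by positivity), ← hδc]
    calc 1 / (n : ℝ) * |∑ k ∈ Finset.range n,
          (f ((k : ℝ) / n) * m n k - q.eval ((k : ℝ) / n) * m n k)|
        ≤ 1 / (n : ℝ) * ∑ k ∈ Finset.range n, δ * m n k := by
          gcongr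
          refine (Finset.abs_sum_le_sum_abs _ _).trans (Finset.sum_le_sum fun k hk => ?_)
          rw [← sub_mul, abs_mul, abs_of_nonneg (hm n k), abs_sub_comm]
          have hkn : k < n := Finset.mem_range.1 hk
          have hn' : (0 : ℝ) < n := by exact_mod_cast (by omega : 0 < n)
          have := hq ((k : ℝ) / n) ⟨by positivity, by
            rw [div_le_one hn']; exact_mod_cast hkn.le⟩
          exact mul_le_mul_of_nonneg_right this.le (hm n k)
      _ = δ * (1 / (n : ℝ) * ∑ k ∈ Finset.range n, m n k) := by rw [← Finset.mul_sum]; ring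
      _ ≤ δ * (|c| + 1) := by gcongr
  have h3 : |c * (∫ t in (0 : ℝ)..1, q.eval t) - c * ∫ t in (0 : ℝ)..1, f t| ≤ ε / 3 := by
    rw [← mul_sub, abs_mul, ← hδc]
    nlinarith [mul_le_mul_of_nonneg_left hint (abs_nonneg c)]
  rw [abs_lt] at hn2 ⊢
  rw [abs_le] at h1 h3
  constructor <;> linarith [h1.1, h1.2, h3.1, h3.2, hn2.1, hn2.2]

/-! ### Stability of means of powers under uniform perturbation -/

lemma lp_mean_add_le {p : ℝ} (hp : 1 ≤ p) (n : ℕ) (u v : ℕ → ℝ) :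
    ((1 / (n : ℝ)) * ∑ k ∈ Finset.range n, |u k + v k| ^ p) ^ (1 / p) ≤
      ((1 / (n : ℝ)) * ∑ k ∈ Finset.range n, |u k| ^ p) ^ (1 / p) +
      ((1 / (n : ℝ)) * ∑ k ∈ Finset.range n, |v k| ^ p) ^ (1 / p) := by
  rw [Real.mul_rpow (by positivity) (by positivity), Real.mul_rpow (by positivity) (by positivity),
    Real.mul_rpow (by positivity) (by positivity), ← mul_add]
  gcongr
  exact Real.Lp_add_le _ u v hp

lemma lp_mean_le {p : ℝ} (hp : 1 ≤ p) (n : ℕ) {r : ℕ → ℝ} {K : ℝ} (hK : 0 ≤ K)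
    (hr : ∀ k < n, |r k| ≤ K) :
    ((1 / (n : ℝ)) * ∑ k ∈ Finset.range n, |r k| ^ p) ^ (1 / p) ≤ K := by
  have hp0 : 0 < p := by linarith
  rw [one_div p, Real.rpow_inv_le_iff_of_pos (by positivity) hK hp0]
  calc (1 / (n : ℝ)) * ∑ k ∈ Finset.range n, |r k| ^ p
      ≤ (1 / (n : ℝ)) * ∑ k ∈ Finset.range n, K ^ p := by
        gcongr with k hk
        exact hr k (Finset.mem_range.1 hk)
    _ ≤ K ^ p := by
        rcases Nat.eq_zero_or_pos n with h0 | hn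
        · subst h0; simp; positivity
        · simp
          have : (n : ℝ) ≠ 0 := by positivity
          field_simp
          exact le_rfl

/-- The limit of the means of `p`-th powers is unchanged if the terms are perturbed by quantities
that tend to zero uniformly in `k`. -/
lemma tendsto_p_mean_of_perturbation {p : ℝ} (hp : 1 ≤ p) (a b : ℕ → ℕ → ℝ) (K : ℕ → ℝ)
    (hK : Tendsto K atTop (nhds 0)) (hab : ∀ᶠ n in atTop, ∀ k < n, |b n k - a n k| ≤ K n) {L : ℝ}
    (ha : Tendsto (fun n : ℕ => (1 / (n : ℝ)) * ∑ k ∈ Finset.range n, |a n k| ^ p) atTop (nhds L)) :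
    Tendsto (fun n : ℕ => (1 / (n : ℝ)) * ∑ k ∈ Finset.range n, |b n k| ^ p) atTop (nhds L) := by
  have hp0 : 0 < p := by linarith
  have hnn : ∀ (u : ℕ → ℕ → ℝ) (n : ℕ),
      0 ≤ (1 / (n : ℝ)) * ∑ k ∈ Finset.range n, |u n k| ^ p := fun u n => by positivity
  have hL : 0 ≤ L := ge_of_tendsto' ha (hnn a)
  have ha' := ha.rpow_const (p := 1 / p) (Or.inr (by positivity))
  have hb' : Tendsto (fun n : ℕ =>
      ((1 / (n : ℝ)) * ∑ k ∈ Finset.range n, |b n k| ^ p) ^ (1 / p)) atTop (nhds (L ^ (1 / p))) := by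
    have hK' : Tendsto (fun n => |K n|) atTop (nhds 0) := by simpa using hK.abs
    have hlo := ha'.sub hK'
    have hhi := ha'.add hK'
    rw [sub_zero] at hlo
    rw [add_zero] at hhi
    refine tendsto_of_tendsto_of_tendsto_of_le_of_le' hlo hhi ?_ ?_
    · filter_upwards [hab] with n hn
      have h1 := lp_mean_add_le hp n (b n) (fun k => a n k - b n k)
      have h2 := lp_mean_le hp n (r := fun k => a n k - b n k) (abs_nonneg (K n))
        fun k hk => by rw [abs_sub_comm]; exact (hn k hk).trans (le_abs_self _)
      simp only [add_sub_cancel] at h1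
      linarith
    · filter_upwards [hab] with n hn
      have h1 := lp_mean_add_le hp n (a n) (fun k => b n k - a n k)
      have h2 := lp_mean_le hp n (r := fun k => b n k - a n k) (abs_nonneg (K n))
        fun k hk => (hn k hk).trans (le_abs_self _)
      simp only [add_sub_cancel] at h1
      linarith
  have hb := hb'.rpow_const (p := p) (Or.inr hp0.le)
  simp only [one_div p, Real.rpow_inv_rpow hL hp0.ne', Real.rpow_inv_rpow (hnn b _) hp0.ne'] at hb
  exact hb

/-- **Convergence of p-variations of controlled processes** (Corollary 4.17): if
`(z,z')` is controlled by an fBm `x` with Hurst parameter `ν ≤ 1/2` in the pathwise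
sense, then for `p > 1/(2ν)` the normalized `p`-variations of `z` converge almost
surely to `c_p ∫₀¹ |z'_t|^p dt`. -/
theorem p_variation_of_controlled_process
    {Ω : Type*} [MeasurableSpace Ω] (P : Measure Ω) [IsProbabilityMeasure P]
    (ν : ℝ) (hν : 0 < ν) (hν2 : ν ≤ 1 / 2)
    (x : ℝ → Ω → ℝ) (hx : IsFBM P ν x)
    (z z' : ℝ → Ω → ℝ)
    (hz : ∀ ω, ContinuousOn (fun t => z t ω) (Set.Icc 0 1))
    (hz' : ∀ ω, ContinuousOn (fun t => z' t ω) (Set.Icc 0 1))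
    (G : Ω → ℝ)
    (hG : ∀ᵐ ω ∂P, ∀ s t : ℝ, 0 ≤ s → s ≤ t → t ≤ 1 →
      |z t ω - z s ω - z' s ω * (x t ω - x s ω)| ≤ G ω * (t - s) ^ (2 * ν))
    (p : ℝ) (hp : 1 / (2 * ν) < p) :
    ∀ᵐ ω ∂P, Tendsto (fun n : ℕ =>
        (1 / (n : ℝ)) * ∑ k ∈ Finset.range n,
          |(n : ℝ) ^ ν * (z (((k : ℝ) + 1) / n) ω - z ((k : ℝ) / n) ω)| ^ p)
      atTop (nhds (cconst p * ∫ t in (0 : ℝ)..1, |z' t ω| ^ p)) := by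
  have hp1 : 1 < p := by
    refine lt_of_le_of_lt ?_ hp
    rw [le_div_iff₀ (by linarith)]; linarith
  have hmono : ∀ᵐ ω ∂P, ∀ i : ℕ, Tendsto (fun n : ℕ => (1 / (n : ℝ)) * ∑ k ∈ Finset.range n,
      ((k : ℝ) / n) ^ i * |(n : ℝ) ^ ν * (x (((k : ℝ) + 1) / n) ω - x ((k : ℝ) / n) ω)| ^ p) atTop
      (nhds (cconst p * ∫ t in (0 : ℝ)..1, t ^ i)) := by
    rw [ae_all_iff]
    intro i
    have hw : ∀ n k : ℕ, k < n → |((k : ℝ) / n) ^ i| ≤ 1 := by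
      intro n k hk
      have hn' : (0 : ℝ) < n := by exact_mod_cast (by omega : 0 < n)
      rw [abs_of_nonneg (by positivity)]
      exact pow_le_one₀ (by positivity) (by rw [div_le_one hn']; exact_mod_cast hk.le)
    filter_upwards [increments_ae_tendsto hν hν2 hx hp1 (fun n k => ((k : ℝ) / n) ^ i) hw] with ω hω
    have := hω.add ((tendsto_power_sum i).const_mul (cconst p))
    simpa using this
  -- everything from here on is deterministic, for a fixed path
  filter_upwards [hmono, hG] with ω hω hGω
  have hfc : ContinuousOn (fun t => |z' t ω| ^ p) (Set.Icc 0 1) :=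
    (hz' ω).abs.rpow_const fun t _ => Or.inr (by linarith)
  have hmain := tendsto_weighted_of_monomials
    (fun n k => |(n : ℝ) ^ ν * (x (((k : ℝ) + 1) / n) ω - x ((k : ℝ) / n) ω)| ^ p)
    (fun n k => by positivity) (cconst p) hω _ hfc
  -- the remainder `n ^ ν * G * n ^ (-2ν)` is the uniform perturbation
  refine tendsto_p_mean_of_perturbation hp1.le
    (fun n k => z' ((k : ℝ) / n) ω * ((n : ℝ) ^ ν * (x (((k : ℝ) + 1) / n) ω - x ((k : ℝ) / n) ω)))
    (fun n k => (n : ℝ) ^ ν * (z (((k : ℝ) + 1) / n) ω - z ((k : ℝ) / n) ω))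
    (fun n => G ω * (n : ℝ) ^ (-ν)) ?_ ?_ ?_
  · have := ((tendsto_rpow_neg_atTop hν).comp tendsto_natCast_atTop_atTop).const_mul (G ω)
    simpa using this
  · filter_upwards [eventually_gt_atTop 0] with n hn k hk
    have hn' : (0 : ℝ) < n := by exact_mod_cast hn
    have h := hGω ((k : ℝ) / n) (((k : ℝ) + 1) / n) (by positivity) (by gcongr; linarith)
      (by rw [div_le_one hn']; exact_mod_cast hk)
    rw [← sub_div, add_sub_cancel_left] at h
    rw [show ∀ u v w y : ℝ, u * v - w * (u * y) = u * (v - w * y) from fun _ _ _ _ => by ring,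
      abs_mul, abs_of_pos (Real.rpow_pos_of_pos hn' ν)]
    calc (n : ℝ) ^ ν * _ ≤ (n : ℝ) ^ ν * (G ω * (1 / (n : ℝ)) ^ (2 * ν)) := by gcongr
      _ = G ω * (n : ℝ) ^ (-ν) := by
        rw [one_div, Real.inv_rpow hn'.le, ← Real.rpow_neg hn'.le, mul_left_comm,
          ← Real.rpow_add hn']
        congr 2; ring
  · refine hmain.congr fun n => ?_
    congr 1
    refine Finset.sum_congr rfl fun k _ => ?_
    rw [abs_mul (z' _ _), Real.mul_rpow (abs_nonneg _) (abs_nonneg _)]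

end
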